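/- There exists an absolute constant C > 0 such that for all integers n ≥ m ≥ 1, writing u = n/m, one has | log ρ(u) + u·ξ(u)/(2m) − log ρ( u − u/(2m) ) | ≤ C·( u/m² + 1/m ). -/

import Mathlib

open Real

noncomputable section

/-- Predicate characterizing the Dickman function `ρ : [0,∞) → (0,∞)`:
continuous on `[0,∞)`, positive, equal to `1` on `[0,1]`, and satisfying the
delay differential equation `t·ρ'(t) + ρ(t-1) = 0` for `t > 1`. -/
def IsDickman (ρ : ℝ → ℝ) : Prop :=
  ContinuousOn ρ (Set.Ici 0) ∧
  (∀ t : ℝ, 0 ≤ t → 0 < ρ t) ∧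
  (∀ t ∈ Set.Icc (0:ℝ) 1, ρ t = 1) ∧
  (∀ t : ℝ, 1 < t → HasDerivAt ρ (-(ρ (t - 1)) / t) t)

/-- `ξ(u)`: for `u > 1`, the unique positive solution of `e^ξ = 1 + u·ξ`; otherwise `0`. -/
def xi (u : ℝ) : ℝ :=
  open Classical in
  if h : ∃ x : ℝ, 0 < x ∧ Real.exp x = 1 + u * x then h.choose else 0

/-- `p_{n,m}`: probability that a uniformly random permutation of `{1,…,n}` is `m`-friable,
i.e. has no cycle of length greater than `m`. -/
def permProb (n m : ℕ) : ℝ :=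
  (Nat.card {σ : Equiv.Perm (Fin n) // ∀ c ∈ σ.cycleType, c ≤ m} : ℝ) /
    (Nat.factorial n : ℝ)

/-- `p_{n,m,q}`: proportion of monic polynomials of degree `n` over a finite field `F`
(of cardinality `q`) that are `m`-friable, i.e. all of whose monic irreducible factors
have degree at most `m`. -/
def polyProb (F : Type) [Field F] [Fintype F] (n m : ℕ) : ℝ :=
  (Nat.card {f : Polynomial F // f.Monic ∧ f.natDegree = n ∧
      ∀ p : Polynomial F, p.Monic → Irreducible p → p ∣ f → p.natDegree ≤ m} : ℝ) /
    (Fintype.card F : ℝ) ^ n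

/-- `F_q(z) = ∏_{deg P ≤ m} (1 - (z/q)^{deg P})⁻¹`, the product over monic irreducible
polynomials `P` over `F` of degree at most `m`. -/
def FqFun (F : Type) [Field F] [Fintype F] (m : ℕ) (z : ℝ) : ℝ :=
  ∏ᶠ p ∈ {p : Polynomial F | p.Monic ∧ Irreducible p ∧ p.natDegree ≤ m},
    (1 - (z / (Fintype.card F : ℝ)) ^ p.natDegree)⁻¹

/-- `G_q(z) = F_q(z) · exp(-∑_{i=1}^m z^i/i)`. -/
def Gq (F : Type) [Field F] [Fintype F] (m : ℕ) (z : ℝ) : ℝ :=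
  FqFun F m z * Real.exp (-(∑ i ∈ Finset.Icc 1 m, z ^ i / (i : ℝ)))

/-- The coefficients `d_{m,i}`. -/
def dcoef (m i : ℕ) : ℝ :=
  if i = m then -(1 / (m : ℝ)) * ∑ j ∈ Finset.Icc 2 m, (1 : ℝ) / (j : ℝ)
  else Real.Gamma ((i : ℝ) + (i : ℝ) / (m : ℝ)) /
    (((m : ℝ) - (i : ℝ)) * (Nat.factorial i : ℝ) * Real.Gamma (1 + (i : ℝ) / (m : ℝ)))

/-- `T(s) = ∫₀^s ((e^t - 1)/t)·((t/m)/(1 - e^{-t/m}) - 1) dt`, integrand extended by `0` at `t = 0`. -/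
def Tfun (m : ℕ) (s : ℝ) : ℝ :=
  ∫ t in (0:ℝ)..s,
    if t = 0 then 0 else
      ((Real.exp t - 1) / t) * ((t / (m : ℝ)) / (1 - Real.exp (-t / (m : ℝ))) - 1)

end

/-
Put `r t = ρ (t - 1) / (t * ρ t)`, so that `(log ρ)' = -r`. Integrating the delay equation gives
`t * ρ t = ∫ s in t - 1..t, ρ s`. If `r` increases on `[t - 1, t]`, comparing this with
`ρ (t - 1) - ρ t = ∫ s in t - 1..t, r s * ρ s` yields `r (t - 1) + 1 / t < r t`, and since
`r' = r * (r t - r (t - 1) - 1 / t)`, this makes `r` increasing throughout. Hence `ρ` is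
squeezed between exponentials on unit intervals, and the integral equation turns into
`ξ t ≤ r t ≤ ξ (t + 1)`. The bound `ξ b - ξ a ≤ 2 * (b - a) / a` then shows that replacing `r` by
`ξ u` on `[u - k, u]` costs only `O((k + k ^ 2) / u)`; the theorem is the case `k = u / (2 * m)`.
-/

theorem lt_of_continuousOn_Ici_of_forall_Ico {α β : Type*} [ConditionallyCompleteLinearOrder α]
    [TopologicalSpace α] [OrderTopology α] [LinearOrder β] [TopologicalSpace β]
    [ClosedIicTopology β] {g : α → β} {a : α} {b : β} (hg : ContinuousOn g (Set.Ici a))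
    (h : ∀ T, a ≤ T → (∀ t ∈ Set.Ico a T, b < g t) → b < g T) {t : α} (ht : a ≤ t) :
    b < g t := by
  by_contra! hle
  have hclosed : IsClosed (Set.Ici a ∩ g ⁻¹' Set.Iic b) :=
    hg.preimage_isClosed_of_isClosed isClosed_Ici isClosed_Iic
  obtain ⟨⟨haT, hT⟩, hmin⟩ := hclosed.isLeast_csInf ⟨t, ht, hle⟩ ⟨a, fun x hx => hx.1⟩
  refine (h _ haT fun s hs => ?_).not_ge hT
  by_contra! hsb
  exact hs.2.not_ge (hmin ⟨hs.1, hsb⟩)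

theorem integral_exp_mul_sub {c : ℝ} (hc : c ≠ 0) (a b : ℝ) :
    ∫ s in a..b, exp (c * (b - s)) = (exp (c * (b - a)) - 1) / c := by
  rw [intervalIntegral.integral_comp_sub_left (fun x => exp (c * x)) b,
    intervalIntegral.integral_comp_mul_left exp hc, integral_exp]
  simp [div_eq_inv_mul]

theorem strictMonoOn_exp_sub_one_div :
    StrictMonoOn (fun x : ℝ => (exp x - 1) / x) {0}ᶜ := by
  intro x hx y hy hxy
  simpa using strictConvexOn_exp.secant_strict_mono (Set.mem_univ 0) (Set.mem_univ x)
    (Set.mem_univ y) hx hy hxy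

theorem two_mul_exp_sub_one_le {x : ℝ} (hx : 0 ≤ x) :
    2 * (exp x - 1) ≤ x * (exp x + 1) := by
  have h := le_log_one_add_of_nonneg (sub_nonneg.2 (one_le_exp hx))
  rw [add_sub_cancel, log_exp, div_le_iff₀ (by linarith [one_le_exp hx])] at h
  linarith

section xi

variable {u z : ℝ}

theorem exists_pos_exp_eq_one_add_mul (hu : 1 < u) : ∃ x : ℝ, 0 < x ∧ exp x = 1 + u * x := by
  have hu₀ : 0 < u := by linarith
  have hlog : log u ≤ 2 * u := by linarith [log_le_sub_one_of_pos hu₀]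
  have hleft : exp (log u) - (1 + u * log u) ≤ 0 := by
    have h := mul_le_mul_of_nonneg_left (one_sub_inv_le_log_of_pos hu₀) hu₀.le
    rw [mul_sub, mul_inv_cancel₀ hu₀.ne'] at h
    rw [exp_log hu₀]
    linarith
  have hright : 0 ≤ exp (2 * u) - (1 + u * (2 * u)) := by
    nlinarith [quadratic_le_exp_of_nonneg (mul_nonneg zero_le_two hu₀.le)]
  obtain ⟨x, hx, hx₀⟩ := intermediate_value_Icc hlog
    (f := fun x => exp x - (1 + u * x)) (by fun_prop) ⟨hleft, hright⟩
  exact ⟨x, (log_pos hu).trans_le hx.1, sub_eq_zero.1 hx₀⟩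

theorem xi_spec (hu : 1 < u) : 0 < xi u ∧ exp (xi u) = 1 + u * xi u := by
  rw [xi, dif_pos (exists_pos_exp_eq_one_add_mul hu)]
  exact (exists_pos_exp_eq_one_add_mul hu).choose_spec

theorem xi_pos (hu : 1 < u) : 0 < xi u := (xi_spec hu).1

theorem exp_xi (hu : 1 < u) : exp (xi u) = 1 + u * xi u := (xi_spec hu).2

theorem xi_of_le_one (hu : u ≤ 1) : xi u = 0 := by
  rw [xi, dif_neg]
  rintro ⟨x, hx, hexp⟩
  nlinarith [add_one_lt_exp hx.ne']

theorem xi_nonneg (u : ℝ) : 0 ≤ xi u := by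
  rcases le_or_gt u 1 with hu | hu
  · exact (xi_of_le_one hu).ge
  · exact (xi_pos hu).le

theorem exp_xi_sub_one_div (hu : 1 < u) : (exp (xi u) - 1) / xi u = u := by
  rw [exp_xi hu, add_sub_cancel_left, mul_div_cancel_right₀ _ (xi_pos hu).ne']

theorem one_add_mul_xi_le_exp (u : ℝ) : 1 + u * xi u ≤ exp (xi u) := by
  rcases le_or_gt u 1 with hu | hu
  · simp [xi_of_le_one hu]
  · exact (exp_xi hu).ge

theorem xi_le_of_le_exp (hz : 0 < z) (h : 1 + u * z ≤ exp z) : xi u ≤ z := by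
  rcases le_or_gt u 1 with hu | hu
  · exact (xi_of_le_one hu).trans_le hz.le
  rw [← strictMonoOn_exp_sub_one_div.le_iff_le (xi_pos hu).ne' hz.ne', exp_xi_sub_one_div hu,
    le_div_iff₀ hz]
  linarith

theorem le_xi_of_exp_le (h : exp z ≤ 1 + u * z) : z ≤ xi u := by
  rcases le_or_gt z 0 with hz | hz
  · exact hz.trans (xi_nonneg u)
  have hu : 1 < u := by nlinarith [add_one_lt_exp hz.ne']
  rw [← strictMonoOn_exp_sub_one_div.le_iff_le hz.ne' (xi_pos hu).ne', exp_xi_sub_one_div hu,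
    div_le_iff₀ hz]
  linarith

theorem two_mul_le_two_add_mul_xi (u : ℝ) : 2 * u ≤ 2 + u * xi u := by
  rcases le_or_gt u 1 with hu | hu
  · rw [xi_of_le_one hu]
    linarith
  · have h := two_mul_exp_sub_one_le (xi_pos hu).le
    rw [exp_xi hu] at h
    nlinarith [xi_pos hu]

theorem xi_sub_xi_le {a b : ℝ} (ha : 0 < a) (hab : a ≤ b) : xi b - xi a ≤ 2 * (b - a) / a := by
  rcases hab.eq_or_lt with rfl | hab
  · simp
  set x := xi a
  set d := 2 * (b - a) / a with hd
  have hx : 0 ≤ x := xi_nonneg a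
  have hd₀ : 0 < d := div_pos (by linarith) ha
  have hb : b = a + a * d / 2 := by rw [hd]; field_simp; ring
  have hslope : 2 * a ≤ 2 + a * x := two_mul_le_two_add_mul_xi a
  rw [sub_le_iff_le_add']
  refine xi_le_of_le_exp (by positivity) ?_
  calc 1 + b * (x + d)
      ≤ (1 + a * x) * (1 + d + d ^ 2 / 2) := by
        have hdiff : (1 + a * x) * (1 + d + d ^ 2 / 2) - (1 + b * (x + d)) =
            d * (2 + d) / 4 * (2 + a * x - 2 * a) + d ^ 2 / 4 * (a * x) := by rw [hb]; ring
        rw [← sub_nonneg, hdiff]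
        exact add_nonneg (mul_nonneg (by positivity) (sub_nonneg.2 hslope)) (by positivity)
    _ ≤ exp x * exp d := by
        gcongr
        · exact one_add_mul_xi_le_exp a
        · exact quadratic_le_exp_of_nonneg hd₀.le
    _ = exp (x + d) := (exp_add x d).symm

end xi

/-- Minus the logarithmic derivative of the Dickman function, as given by the delay equation.
It carries this meaning only for `1 < t`. -/
noncomputable def decayRate (ρ : ℝ → ℝ) (t : ℝ) : ℝ :=
  ρ (t - 1) / (t * ρ t)

namespace IsDickman

open Set intervalIntegral

variable {ρ : ℝ → ℝ} {a b t : ℝ}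

theorem continuousOn (hρ : IsDickman ρ) : ContinuousOn ρ (Ici 0) := hρ.1

theorem pos (hρ : IsDickman ρ) (ht : 0 ≤ t) : 0 < ρ t := hρ.2.1 t ht

theorem eq_one (hρ : IsDickman ρ) (ht₀ : 0 ≤ t) (ht₁ : t ≤ 1) : ρ t = 1 := hρ.2.2.1 t ⟨ht₀, ht₁⟩

theorem hasDerivAt (hρ : IsDickman ρ) (ht : 1 < t) : HasDerivAt ρ (-ρ (t - 1) / t) t :=
  hρ.2.2.2 t ht

theorem continuousOn_Ici_one (hρ : IsDickman ρ) : ContinuousOn ρ (Ici 1) :=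
  hρ.continuousOn.mono (Ici_subset_Ici.2 zero_le_one)

theorem continuousOn_comp_sub_one (hρ : IsDickman ρ) :
    ContinuousOn (fun t => ρ (t - 1)) (Ici 1) :=
  hρ.continuousOn.comp (by fun_prop) fun _ ht => mem_Ici.2 (sub_nonneg.2 ht)

theorem intervalIntegrable (hρ : IsDickman ρ) (ha : 0 ≤ a) (hb : 0 ≤ b) :
    IntervalIntegrable ρ MeasureTheory.volume a b :=
  (hρ.continuousOn.mono fun _ hs => (le_min ha hb).trans hs.1).intervalIntegrable

theorem eq_max_one (hρ : IsDickman ρ) (ht : 0 ≤ t) : ρ t = ρ (max t 1) := by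
  rcases le_total t 1 with h | h
  · rw [max_eq_right h, hρ.eq_one ht h, hρ.eq_one zero_le_one le_rfl]
  · rw [max_eq_left h]

theorem hasDerivAt_mul_self (hρ : IsDickman ρ) (ht : 1 < t) :
    HasDerivAt (fun s => s * ρ s) (ρ t - ρ (t - 1)) t := by
  refine ((hasDerivAt_id' t).mul (hρ.hasDerivAt ht)).congr_deriv ?_
  have : t ≠ 0 := by positivity
  field_simp
  ring

theorem integral_sub_one_self (hρ : IsDickman ρ) (ht : 1 ≤ t) :
    ∫ s in (t - 1)..t, ρ s = t * ρ t := by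
  have ht₀ : 0 ≤ t - 1 := sub_nonneg.2 ht
  have hshift : IntervalIntegrable (fun s => ρ (s - 1)) MeasureTheory.volume 1 t :=
    (hρ.continuousOn_comp_sub_one.mono Icc_subset_Ici_self).intervalIntegrable_of_Icc ht
  have hone : ∫ s in (0 : ℝ)..1, ρ s = 1 := by
    rw [integral_congr (g := fun _ => 1) fun s hs => ?_]
    · simp
    · rw [uIcc_of_le zero_le_one] at hs
      exact hρ.eq_one hs.1 hs.2
  have hderiv : ∫ s in (1 : ℝ)..t, (ρ s - ρ (s - 1)) = t * ρ t - 1 * ρ 1 :=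
    integral_eq_sub_of_hasDerivAt_of_le ht
      (continuousOn_id.mul (hρ.continuousOn_Ici_one.mono Icc_subset_Ici_self))
      (fun s hs => hρ.hasDerivAt_mul_self hs.1)
      ((hρ.intervalIntegrable zero_le_one (by linarith)).sub hshift)
  rw [integral_sub (hρ.intervalIntegrable zero_le_one (by linarith)) hshift,
    integral_comp_sub_right ρ, sub_self, hρ.eq_one zero_le_one le_rfl] at hderiv
  have hleft := integral_add_adjacent_intervals (hρ.intervalIntegrable le_rfl ht₀)
    (hρ.intervalIntegrable ht₀ (by linarith : 0 ≤ t))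
  have hright := integral_add_adjacent_intervals (hρ.intervalIntegrable le_rfl zero_le_one)
    (hρ.intervalIntegrable zero_le_one (by linarith : 0 ≤ t))
  linarith

theorem decayRate_pos (hρ : IsDickman ρ) (ht : 1 ≤ t) : 0 < decayRate ρ t :=
  div_pos (hρ.pos (by linarith)) (mul_pos (by linarith) (hρ.pos (by linarith)))

theorem decayRate_mul (hρ : IsDickman ρ) (ht : 0 < t) :
    decayRate ρ t * (t * ρ t) = ρ (t - 1) :=
  div_mul_cancel₀ _ (mul_pos ht (hρ.pos ht.le)).ne'

theorem continuousOn_decayRate (hρ : IsDickman ρ) : ContinuousOn (decayRate ρ) (Ici 1) :=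
  hρ.continuousOn_comp_sub_one.div (continuousOn_id.mul hρ.continuousOn_Ici_one) fun t ht =>
    have ht₀ : 0 < t := zero_lt_one.trans_le ht
    (mul_pos ht₀ (hρ.pos ht₀.le)).ne'

theorem hasDerivAt_neg_decayRate_mul (hρ : IsDickman ρ) (ht : 1 < t) :
    HasDerivAt ρ (-(decayRate ρ t * ρ t)) t := by
  have ht₀ : 0 < t := by linarith
  refine (hρ.hasDerivAt ht).congr_deriv ?_
  rw [← hρ.decayRate_mul ht₀]
  field_simp

theorem hasDerivAt_log (hρ : IsDickman ρ) (ht : 1 < t) :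
    HasDerivAt (fun s => log (ρ s)) (-decayRate ρ t) t := by
  have hpos := hρ.pos (by linarith : 0 ≤ t)
  refine ((hρ.hasDerivAt_neg_decayRate_mul ht).log hpos.ne').congr_deriv ?_
  field_simp

theorem hasDerivAt_decayRate (hρ : IsDickman ρ) (ht : 2 < t) :
    HasDerivAt (decayRate ρ)
      (decayRate ρ t * (decayRate ρ t - decayRate ρ (t - 1) - 1 / t)) t := by
  have ht₀ : 0 < t := by linarith
  have hpos := hρ.pos ht₀.le
  refine (((hρ.hasDerivAt_neg_decayRate_mul (t := t - 1) (by linarith)).comp_sub_const t 1).div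
    (hρ.hasDerivAt_mul_self (by linarith)) (mul_pos ht₀ hpos).ne').congr_deriv ?_
  rw [← hρ.decayRate_mul ht₀]
  field_simp
  ring

theorem strictAntiOn (hρ : IsDickman ρ) : StrictAntiOn ρ (Ici 1) := by
  refine strictAntiOn_of_deriv_neg (convex_Ici 1) hρ.continuousOn_Ici_one fun t ht => ?_
  rw [interior_Ici, mem_Ioi] at ht
  rw [(hρ.hasDerivAt_neg_decayRate_mul ht).deriv]
  exact neg_neg_of_pos (mul_pos (hρ.decayRate_pos ht.le) (hρ.pos (by linarith)))

theorem strictAntiOn_mul_self (hρ : IsDickman ρ) :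
    StrictAntiOn (fun t => t * ρ t) (Ici 1) := by
  refine strictAntiOn_of_deriv_neg (convex_Ici 1)
    (continuousOn_id.mul hρ.continuousOn_Ici_one) fun t ht => ?_
  rw [interior_Ici, mem_Ioi] at ht
  rw [(hρ.hasDerivAt_mul_self ht).deriv, sub_neg, hρ.eq_max_one (by linarith : 0 ≤ t - 1)]
  exact hρ.strictAntiOn (mem_Ici.2 (le_max_right _ _)) ht.le (max_lt (by linarith) ht)

theorem strictMonoOn_decayRate_Icc_one_two (hρ : IsDickman ρ) :
    StrictMonoOn (decayRate ρ) (Icc 1 2) := by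
  intro a ha b hb hab
  have hnum : ∀ t ∈ Icc (1 : ℝ) 2, ρ (t - 1) = 1 := fun t ht =>
    hρ.eq_one (by linarith [ht.1]) (by linarith [ht.2])
  have hb₀ : 0 < b := by linarith [hb.1]
  rw [decayRate, decayRate, hnum a ha, hnum b hb]
  exact one_div_lt_one_div_of_lt (mul_pos hb₀ (hρ.pos hb₀.le))
    (hρ.strictAntiOn_mul_self ha.1 hb.1 hab)

theorem mul_integral_lt_of_strictMonoOn (hρ : IsDickman ρ) (ha : 1 ≤ a) (hab : a < b)
    (hmono : StrictMonoOn (decayRate ρ) (Icc a b)) :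
    decayRate ρ a * ∫ s in a..b, ρ s < ρ a - ρ b := by
  have hcont : ContinuousOn ρ (Icc a b) :=
    hρ.continuousOn_Ici_one.mono (Icc_subset_Ici_self.trans (Ici_subset_Ici.2 ha))
  have hcont' : ContinuousOn (fun s => decayRate ρ s * ρ s) (Icc a b) :=
    (hρ.continuousOn_decayRate.mono
      (Icc_subset_Ici_self.trans (Ici_subset_Ici.2 ha))).mul hcont
  have hderiv : ∫ s in a..b, -(decayRate ρ s * ρ s) = ρ b - ρ a :=
    integral_eq_sub_of_hasDerivAt_of_le hab.le hcont
      (fun s hs => hρ.hasDerivAt_neg_decayRate_mul (ha.trans_lt hs.1))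
      (hcont'.neg.intervalIntegrable_of_Icc hab.le)
  have hlt : ∫ s in a..b, decayRate ρ a * ρ s < ∫ s in a..b, decayRate ρ s * ρ s := by
    have hpos : ∀ s, a < s → 0 < ρ s := fun s hs => hρ.pos (by linarith)
    refine integral_lt_integral_of_continuousOn_of_le_of_exists_lt hab
      (continuousOn_const.mul hcont) hcont' (fun s hs => ?_) ⟨b, right_mem_Icc.2 hab.le, ?_⟩
    · exact mul_le_mul_of_nonneg_right
        (hmono.monotoneOn (left_mem_Icc.2 hab.le) (Ioc_subset_Icc_self hs) hs.1.le)
        (hpos s hs.1).le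
    · exact mul_lt_mul_of_pos_right
        (hmono (left_mem_Icc.2 hab.le) (right_mem_Icc.2 hab.le) hab) (hpos b hab)
  rw [integral_neg] at hderiv
  rw [integral_const_mul] at hlt
  linarith

theorem decayRate_gap_pos_of_strictMonoOn (hρ : IsDickman ρ) (ht : 2 ≤ t)
    (hmono : StrictMonoOn (decayRate ρ) (Icc (t - 1) t)) :
    0 < decayRate ρ t - decayRate ρ (t - 1) - 1 / t := by
  have ht₀ : 0 < t := by linarith
  have hpos : 0 < t * ρ t := mul_pos ht₀ (hρ.pos ht₀.le)
  have h := hρ.mul_integral_lt_of_strictMonoOn (by linarith) (by linarith) hmono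
  rw [hρ.integral_sub_one_self (by linarith), ← hρ.decayRate_mul ht₀] at h
  refine pos_of_mul_pos_left (b := t * ρ t) ?_ hpos.le
  calc 0 < decayRate ρ t * (t * ρ t) - ρ t - decayRate ρ (t - 1) * (t * ρ t) := by linarith
    _ = (decayRate ρ t - decayRate ρ (t - 1) - 1 / t) * (t * ρ t) := by field_simp; ring

theorem strictMonoOn_decayRate_Icc_of_gap_pos (hρ : IsDickman ρ) {T : ℝ} (hT : 2 ≤ T)
    (hgap : ∀ t ∈ Ioo 2 T, 0 < decayRate ρ t - decayRate ρ (t - 1) - 1 / t) :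
    StrictMonoOn (decayRate ρ) (Icc 1 T) := by
  have htail : StrictMonoOn (decayRate ρ) (Icc 2 T) := by
    refine strictMonoOn_of_deriv_pos (convex_Icc 2 T)
      (hρ.continuousOn_decayRate.mono fun s hs => one_le_two.trans hs.1) fun s hs => ?_
    rw [interior_Icc] at hs
    rw [(hρ.hasDerivAt_decayRate hs.1).deriv]
    exact mul_pos (hρ.decayRate_pos (by linarith [hs.1])) (hgap s hs)
  rw [← Icc_union_Icc_eq_Icc one_le_two hT]
  exact hρ.strictMonoOn_decayRate_Icc_one_two.union htail (isGreatest_Icc one_le_two)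
    (isLeast_Icc hT)

theorem decayRate_gap_pos (hρ : IsDickman ρ) (ht : 2 ≤ t) :
    0 < decayRate ρ t - decayRate ρ (t - 1) - 1 / t := by
  have hcont : ContinuousOn (fun t => decayRate ρ t - decayRate ρ (t - 1) - 1 / t) (Ici 2) := by
    refine ((hρ.continuousOn_decayRate.mono (Ici_subset_Ici.2 one_le_two)).sub
      (hρ.continuousOn_decayRate.comp (by fun_prop) fun s hs => ?_)).sub
      (continuousOn_const.div continuousOn_id fun s hs => ?_)
    · have : 2 ≤ s := hs
      exact mem_Ici.2 (by linarith)
    · exact (two_pos.trans_le hs).ne'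
  refine lt_of_continuousOn_Ici_of_forall_Ico hcont (fun T hT hlt => ?_) ht
  have hmono := hρ.strictMonoOn_decayRate_Icc_of_gap_pos hT fun s hs =>
    hlt s (Ioo_subset_Ico_self hs)
  exact hρ.decayRate_gap_pos_of_strictMonoOn hT
    (hmono.mono (Icc_subset_Icc_left (by linarith)))

theorem strictMonoOn_decayRate (hρ : IsDickman ρ) : StrictMonoOn (decayRate ρ) (Ici 1) := by
  intro a ha b hb hab
  have hmono := hρ.strictMonoOn_decayRate_Icc_of_gap_pos (le_max_left 2 b) fun t ht =>
    hρ.decayRate_gap_pos ht.1.le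
  exact hmono ⟨ha, hab.le.trans (le_max_right _ _)⟩ ⟨hb, le_max_right _ _⟩ hab

theorem exists_log_sub_log_eq (hρ : IsDickman ρ) (ha : 1 ≤ a) (hab : a < b) :
    ∃ c ∈ Ioo a b, log (ρ a) - log (ρ b) = (b - a) * decayRate ρ c := by
  have hcont : ContinuousOn (fun t => log (ρ t)) (Icc a b) :=
    (hρ.continuousOn_Ici_one.mono (Icc_subset_Ici_self.trans (Ici_subset_Ici.2 ha))).log
      fun t ht => (hρ.pos (by linarith [ht.1])).ne'
  obtain ⟨c, hc, hslope⟩ := exists_hasDerivAt_eq_slope _ _ hab hcont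
    fun t ht => hρ.hasDerivAt_log (ha.trans_lt ht.1)
  rw [eq_div_iff (by linarith)] at hslope
  exact ⟨c, hc, by linarith⟩

theorem mul_decayRate_le_log_sub_log (hρ : IsDickman ρ) (ha : 1 ≤ a) (hab : a ≤ b) :
    (b - a) * decayRate ρ a ≤ log (ρ a) - log (ρ b) := by
  rcases hab.eq_or_lt with rfl | hab
  · simp
  obtain ⟨c, hc, hslope⟩ := hρ.exists_log_sub_log_eq ha hab
  rw [hslope]
  exact mul_le_mul_of_nonneg_left
    (hρ.strictMonoOn_decayRate ha (ha.trans hc.1.le) hc.1).le (by linarith)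

theorem log_sub_log_le_mul_decayRate (hρ : IsDickman ρ) (ha : 0 ≤ a) (hab : a ≤ b) (hb : 1 ≤ b) :
    log (ρ a) - log (ρ b) ≤ (b - a) * decayRate ρ b := by
  have hrate : 0 ≤ decayRate ρ b := (hρ.decayRate_pos hb).le
  rw [hρ.eq_max_one ha]
  rcases (max_le hab hb).eq_or_lt with heq | hlt
  · rw [heq, sub_self]
    exact mul_nonneg (by linarith) hrate
  obtain ⟨c, hc, hslope⟩ := hρ.exists_log_sub_log_eq (le_max_right a 1) hlt
  rw [hslope]
  have hc₁ : 1 ≤ c := (le_max_right a 1).trans hc.1.le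
  exact mul_le_mul (sub_le_sub_left (le_max_left a 1) b)
    (hρ.strictMonoOn_decayRate hc₁ hb hc.2).le (hρ.decayRate_pos hc₁).le (by linarith)

theorem decayRate_le_xi_add_one (hρ : IsDickman ρ) (ht : 1 ≤ t) :
    decayRate ρ t ≤ xi (t + 1) := by
  set c := decayRate ρ t
  have hc : 0 < c := hρ.decayRate_pos ht
  have hpos : 0 < ρ (t + 1) := hρ.pos (by linarith)
  have hbound : ∀ s ∈ Icc t (t + 1), ρ (t + 1) * exp (c * (t + 1 - s)) ≤ ρ s := by
    intro s hs
    have hs₁ : 1 ≤ s := ht.trans hs.1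
    have hrate : c ≤ decayRate ρ s := hρ.strictMonoOn_decayRate.monotoneOn ht hs₁ hs.1
    have hlog := hρ.mul_decayRate_le_log_sub_log hs₁ hs.2
    have := mul_le_mul_of_nonneg_left hrate (sub_nonneg.2 hs.2)
    rw [← log_le_log_iff (by positivity) (hρ.pos (by linarith)), log_mul hpos.ne' (exp_ne_zero _),
      log_exp]
    linarith
  have hint : ρ (t + 1) * ((exp c - 1) / c) ≤ ρ (t + 1) * (t + 1) := by
    calc ρ (t + 1) * ((exp c - 1) / c)
        = ∫ s in t..t + 1, ρ (t + 1) * exp (c * (t + 1 - s)) := by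
          rw [integral_const_mul, integral_exp_mul_sub hc.ne', add_sub_cancel_left, mul_one]
      _ ≤ ∫ s in t..t + 1, ρ s :=
          integral_mono_on (by linarith) (Continuous.intervalIntegrable (by fun_prop) _ _)
            (hρ.intervalIntegrable (by linarith) (by linarith)) hbound
      _ = ρ (t + 1) * (t + 1) := by
          have h := hρ.integral_sub_one_self (t := t + 1) (by linarith)
          rwa [add_sub_cancel_right, mul_comm] at h
  refine le_xi_of_exp_le ?_
  have h := le_of_mul_le_mul_left hint hpos
  rw [div_le_iff₀ hc] at h
  linarith

theorem xi_le_decayRate (hρ : IsDickman ρ) (ht : 1 ≤ t) : xi t ≤ decayRate ρ t := by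
  set c := decayRate ρ t
  have hc : 0 < c := hρ.decayRate_pos ht
  have hpos : 0 < ρ t := hρ.pos (by linarith)
  have hbound : ∀ s ∈ Icc (t - 1) t, ρ s ≤ ρ t * exp (c * (t - s)) := by
    intro s hs
    have hs₀ : 0 ≤ s := by linarith [hs.1]
    have hlog := hρ.log_sub_log_le_mul_decayRate hs₀ hs.2 ht
    rw [← log_le_log_iff (hρ.pos hs₀) (by positivity), log_mul hpos.ne' (exp_ne_zero _), log_exp]
    linarith
  have hint : ρ t * t ≤ ρ t * ((exp c - 1) / c) := by
    calc ρ t * t = ∫ s in (t - 1)..t, ρ s := by rw [hρ.integral_sub_one_self ht, mul_comm]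
      _ ≤ ∫ s in (t - 1)..t, ρ t * exp (c * (t - s)) :=
          integral_mono_on (by linarith) (hρ.intervalIntegrable (by linarith) (by linarith))
            (Continuous.intervalIntegrable (by fun_prop) _ _) hbound
      _ = ρ t * ((exp c - 1) / c) := by
          rw [integral_const_mul, integral_exp_mul_sub hc.ne', sub_sub_cancel, mul_one]
  refine xi_le_of_le_exp hc ?_
  have h := le_of_mul_le_mul_left hint hpos
  rw [le_div_iff₀ hc] at h
  linarith

theorem mul_xi_le_log_sub_log (hρ : IsDickman ρ) (ha : 0 ≤ a) (hab : a ≤ b) (hb : 1 ≤ b) :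
    (b - a) * xi a ≤ log (ρ a) - log (ρ b) := by
  rcases le_total a 1 with ha₁ | ha₁
  · calc (b - a) * xi a = 0 := by rw [xi_of_le_one ha₁, mul_zero]
      _ ≤ (b - 1) * decayRate ρ 1 := mul_nonneg (by linarith) (hρ.decayRate_pos le_rfl).le
      _ ≤ log (ρ 1) - log (ρ b) := hρ.mul_decayRate_le_log_sub_log le_rfl hb
      _ = log (ρ a) - log (ρ b) := by rw [hρ.eq_max_one ha, max_eq_right ha₁]
  · calc (b - a) * xi a ≤ (b - a) * decayRate ρ a :=
          mul_le_mul_of_nonneg_left (hρ.xi_le_decayRate ha₁) (by linarith)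
      _ ≤ log (ρ a) - log (ρ b) := hρ.mul_decayRate_le_log_sub_log ha₁ hab

theorem log_sub_log_le_mul_xi_add_one (hρ : IsDickman ρ) (ha : 0 ≤ a) (hab : a ≤ b)
    (hb : 1 ≤ b) : log (ρ a) - log (ρ b) ≤ (b - a) * xi (b + 1) :=
  (hρ.log_sub_log_le_mul_decayRate ha hab hb).trans
    (mul_le_mul_of_nonneg_left (hρ.decayRate_le_xi_add_one hb) (by linarith))

theorem abs_log_add_mul_xi_sub_log_le (hρ : IsDickman ρ) {u k : ℝ} (hu : 1 ≤ u) (hk : 0 ≤ k)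
    (hku : k ≤ u / 2) :
    |log (ρ u) + k * xi u - log (ρ (u - k))| ≤ (4 * k ^ 2 + 2 * k) / u := by
  have hu₀ : 0 < u := by linarith
  have hlower := hρ.mul_xi_le_log_sub_log (a := u - k) (by linarith) (by linarith) hu
  have hupper := hρ.log_sub_log_le_mul_xi_add_one (a := u - k) (by linarith) (by linarith) hu
  rw [sub_sub_cancel] at hlower hupper
  have hleft : k * (xi u - xi (u - k)) ≤ 4 * k ^ 2 / u := by
    calc k * (xi u - xi (u - k)) ≤ k * (2 * (u - (u - k)) / (u - k)) := by
          gcongr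
          exact xi_sub_xi_le (by linarith) (by linarith)
      _ ≤ k * (2 * (u - (u - k)) / (u / 2)) := by
          gcongr <;> linarith
      _ = 4 * k ^ 2 / u := by field_simp; ring
  have hright : k * (xi (u + 1) - xi u) ≤ 2 * k / u := by
    calc k * (xi (u + 1) - xi u) ≤ k * (2 * (u + 1 - u) / u) := by
          gcongr
          exact xi_sub_xi_le hu₀ (by linarith)
      _ = 2 * k / u := by ring
  have hleft₀ : 0 ≤ 4 * k ^ 2 / u := by positivity
  have hright₀ : 0 ≤ 2 * k / u := by positivity
  rw [add_div, abs_le]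
  constructor <;> linarith

end IsDickman

theorem stmt2_general {ρ : ℝ → ℝ} (hρ : IsDickman ρ) {u M : ℝ} (hu : 1 ≤ u) (hM : 1 ≤ M) :
    |log (ρ u) + u * xi u / (2 * M) - log (ρ (u - u / (2 * M)))| ≤ u / M ^ 2 + 1 / M := by
  have hku : u / (2 * M) ≤ u / 2 := by gcongr; linarith
  convert hρ.abs_log_add_mul_xi_sub_log_le hu (by positivity) hku using 1
  · rw [div_mul_eq_mul_div]
  · field_simp
    ring

/-- There exists an absolute constant `C > 0` such that for all integers
`n ≥ m ≥ 1`, writing `u = n/m`, one has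
`|log ρ(u) + u·ξ(u)/(2m) − log ρ(u − u/(2m))| ≤ C·(u/m² + 1/m)`. -/
theorem stmt2 :
    ∃ C : ℝ, 0 < C ∧ ∀ n m : ℕ, 1 ≤ m → m ≤ n → ∀ ρ : ℝ → ℝ, IsDickman ρ →
      ∀ u : ℝ, u = (n : ℝ) / (m : ℝ) →
      |Real.log (ρ u) + u * xi u / (2 * (m : ℝ)) -
          Real.log (ρ (u - u / (2 * (m : ℝ))))| ≤
        C * (u / (m : ℝ) ^ 2 + 1 / (m : ℝ)) := by
  refine ⟨1, one_pos, fun n m hm hmn ρ hρ u hu => ?_⟩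
  have hM : (1 : ℝ) ≤ m := mod_cast hm
  have hu₁ : 1 ≤ u := hu ▸ (one_le_div (by linarith)).2 (mod_cast hmn)
  exact (stmt2_general hρ hu₁ hM).trans_eq (one_mul _).symm
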